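/- Let G be a graph whose vertex set is partitioned into three cliques Q_1, Q_2, Q_3 such that: (a) each vertex in Q_i has at most one neighbor in Q_j for all i ≠ j; (b) if a vertex in Q_i is adjacent to vertices b ∈ Q_j and c ∈ Q_k (with i, j, k distinct), then b and c are adjacent; (c) there are finite lists L_1, L_2, L_3 of colors with every vertex of Q_i having list L_i, |L_i| ≥ |Q_i|, each L_i containing a color d_i such that d_1, d_2, d_3 are pairwise distinct, and no color belonging to all three lists L_1, L_2, L_3. Then G admits a proper coloring assigning to each vertex of Q_i a color from L_i. -/

import Mathlib

open SimpleGraph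

/-- The claw `K_{1,3}`: vertex 0 adjacent to 1, 2, 3. -/
def claw : SimpleGraph (Fin 4) := SimpleGraph.fromRel (fun a _ => a = 0)

/-- `4K_1`: the edgeless graph on four vertices. -/
def fourK1 : SimpleGraph (Fin 4) := ⊥

/-- `K_5 - e`: the complete graph on five vertices minus the edge {0,1}. -/
def K5e : SimpleGraph (Fin 5) :=
  SimpleGraph.fromRel (fun a b => ¬(a = 0 ∧ b = 1) ∧ ¬(a = 1 ∧ b = 0))

/-- The 5-wheel: the cycle 0-1-2-3-4-0 together with hub 5 adjacent to all. -/
def wheel5 : SimpleGraph (Fin 6) :=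
  SimpleGraph.fromRel (fun a b =>
    (a ≠ 5 ∧ b ≠ 5 ∧ b.val = (a.val + 1) % 5) ∨ a = 5 ∨ b = 5)

/-- The `C_5`-twin: the cycle 0-1-2-3-4-0 together with vertex 5, a true twin
of vertex 0 (adjacent to 0, 1 and 4). -/
def C5twin : SimpleGraph (Fin 6) :=
  SimpleGraph.fromRel (fun a b =>
    (a ≠ 5 ∧ b ≠ 5 ∧ b.val = (a.val + 1) % 5) ∨ (a = 5 ∧ (b = 0 ∨ b = 1 ∨ b = 4)))

/-- The `P_5`-twin: the path 0-1-2-3-4 together with vertex 5, a true twin of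
the middle vertex 2 (adjacent to 1, 2 and 3). -/
def P5twin : SimpleGraph (Fin 6) :=
  SimpleGraph.fromRel (fun a b =>
    (a ≠ 5 ∧ b ≠ 5 ∧ b.val = a.val + 1) ∨ (a = 5 ∧ (b = 1 ∨ b = 2 ∨ b = 3)))

/-- The chordless cycle on seven vertices. -/
def C7 : SimpleGraph (Fin 7) :=
  SimpleGraph.fromRel (fun a b => b.val = (a.val + 1) % 7)

/-- `G` is `H`-free: `G` contains no induced subgraph isomorphic to `H`,
i.e. there is no graph embedding of `H` into `G`. -/
def Free {V W : Type*} (G : SimpleGraph V) (H : SimpleGraph W) : Prop :=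
  IsEmpty (H ↪g G)

/-- `X_i`: vertices outside the five-cycle `v 0, …, v 4` whose neighbours on the
cycle are exactly `v i` and `v (i+1)`. -/
def cycX {V : Type*} (G : SimpleGraph V) (v : ZMod 5 → V) (i : ZMod 5) : Set V :=
  {w | w ∉ Set.range v ∧ ∀ j : ZMod 5, G.Adj w (v j) ↔ (j = i ∨ j = i + 1)}

/-- `Y_i`: vertices outside the five-cycle whose neighbours on the cycle are
exactly `v i, v (i+1), v (i+2), v (i+3)`. -/
def cycY {V : Type*} (G : SimpleGraph V) (v : ZMod 5 → V) (i : ZMod 5) : Set V :=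
  {w | w ∉ Set.range v ∧
    ∀ j : ZMod 5, G.Adj w (v j) ↔ (j = i ∨ j = i + 1 ∨ j = i + 2 ∨ j = i + 3)}

/-- `R`: vertices outside the five-cycle with no neighbour on the cycle. -/
def cycR {V : Type*} (G : SimpleGraph V) (v : ZMod 5 → V) : Set V :=
  {w | w ∉ Set.range v ∧ ∀ j : ZMod 5, ¬ G.Adj w (v j)}

theorem hall_step {V α : Type*} [DecidableEq V] [DecidableEq α] (S : Finset V) (L : Finset α)
    (F : V → α → Prop) (hc : S.card ≤ L.card) (f₀ : V → α)
    (hF : ∀ c ∈ L, ∀ x ∈ S, ∀ y ∈ S, F x c → F y c → x = y)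
    (hav : ∀ x ∈ S, ∃ c ∈ L, ¬ F x c) :
    ∃ f : V → α, (∀ x ∈ S, f x ∈ L ∧ ¬ F x (f x)) ∧
      ∀ x ∈ S, ∀ y ∈ S, f x = f y → x = y := by
  classical
  have key := (Finset.all_card_le_biUnion_card_iff_exists_injective
    (fun x : S => L.filter (fun c => ¬ F x c))).1 (by
      intro T
      have hTS : T.card ≤ S.card := by
        have := Finset.card_le_univ T
        simpa using this
      by_cases h2 : 1 < T.card
      · obtain ⟨a, ha, b, hb, hab⟩ := Finset.one_lt_card.1 h2
        have : L ⊆ T.biUnion (fun x : S => L.filter (fun c => ¬ F x c)) := by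
          intro c hcL
          by_cases hFa : F a c
          · refine Finset.mem_biUnion.2 ⟨b, hb, Finset.mem_filter.2 ⟨hcL, fun hFb => hab ?_⟩⟩
            exact Subtype.ext (hF c hcL a a.2 b b.2 hFa hFb)
          · exact Finset.mem_biUnion.2 ⟨a, ha, Finset.mem_filter.2 ⟨hcL, hFa⟩⟩
        exact (hTS.trans hc).trans (Finset.card_le_card this)
      · rcases Finset.eq_empty_or_nonempty T with rfl | ⟨a, ha⟩
        · simp
        · obtain ⟨c, hcL, hcF⟩ := hav a a.2
          have : 0 < (T.biUnion (fun x : S => L.filter (fun c => ¬ F x c))).card :=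
            Finset.card_pos.2 ⟨c, Finset.mem_biUnion.2 ⟨a, ha, Finset.mem_filter.2 ⟨hcL, hcF⟩⟩⟩
          omega)
  obtain ⟨g, hg, hgm⟩ := key
  refine ⟨fun x => if h : x ∈ S then g ⟨x, h⟩ else f₀ x, ?_, ?_⟩
  · intro x hx
    have := Finset.mem_filter.1 (hgm ⟨x, hx⟩)
    simpa [hx] using this
  · intro x hx y hy h
    simp only [hx, hy, dif_pos] at h
    exact congrArg Subtype.val (hg h)

theorem hall_step' {V α : Type*} [DecidableEq V] [DecidableEq α] (S : Finset V) (L : Finset α)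
    (F : V → α → Prop) (hc : S.card ≤ L.card) (f₀ : V → α)
    (hF : ∀ c ∈ L, ∀ x ∈ S, ∀ y ∈ S, F x c → F y c → x = y)
    (hav : ∀ x ∈ S, ∃ c ∈ L, ¬ F x c) :
    ∃ f : V → α, (∀ x ∉ S, f x = f₀ x) ∧ (∀ x ∈ S, f x ∈ L ∧ ¬ F x (f x)) ∧
      ∀ x ∈ S, ∀ y ∈ S, f x = f y → x = y := by
  classical
  obtain ⟨f, h1, h2⟩ := hall_step S L F hc f₀ hF hav
  refine ⟨fun x => if x ∈ S then f x else f₀ x, ?_, ?_, ?_⟩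
  · intro x hx; simp [hx]
  · intro x hx; simpa [hx] using h1 x hx
  · intro x hx y hy h
    simp only [hx, hy, if_true] at h
    exact h2 x hx y hy h

/-- `f` is a good partial colouring on the cliques with index in `I`. -/
def Good18 {V α : Type*} (G : SimpleGraph V) (Q : Fin 3 → Finset V) (L : Fin 3 → Finset α)
    (I : Finset (Fin 3)) (f : V → α) : Prop :=
  (∀ i ∈ I, ∀ w ∈ Q i, f w ∈ L i) ∧
    ∀ i ∈ I, ∀ j ∈ I, ∀ a ∈ Q i, ∀ b ∈ Q j, G.Adj a b → f a ≠ f b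

theorem ext18 {V α : Type*} [DecidableEq V] [DecidableEq α] (G : SimpleGraph V)
    (Q : Fin 3 → Finset V)
    (hdisj : ∀ i j, i ≠ j → Disjoint (Q i) (Q j))
    (hclique : ∀ i, G.IsClique (Q i : Set V))
    (ha : ∀ i j, i ≠ j → ∀ x ∈ Q i, ∀ b ∈ Q j, ∀ c ∈ Q j,
      G.Adj x b → G.Adj x c → b = c)
    (L : Fin 3 → Finset α)
    (hsize : ∀ i, (Q i).card ≤ (L i).card)
    (hnocommon : ¬ ∃ c : α, ∀ i, c ∈ L i)
    (I : Finset (Fin 3)) (k : Fin 3) (hk : k ∉ I) (f : V → α) (hf : Good18 G Q L I f)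
    (hav : ∀ z ∈ Q k, ∃ c ∈ L k, ∀ i ∈ I, ∀ w ∈ Q i, G.Adj z w → f w ≠ c) :
    ∃ f', Good18 G Q L (insert k I) f' := by
  obtain ⟨f', h0, h1, h2⟩ := hall_step' (Q k) (L k)
    (fun z c => ∃ i ∈ I, ∃ w ∈ Q i, G.Adj z w ∧ f w = c) (hsize k) f (by
      rintro c hcL x hx y hy ⟨i, hi, w, hw, hxw, hfw⟩ ⟨j, hj, w', hw', hyw, hfw'⟩
      have hik : i ≠ k := fun h => hk (h ▸ hi)
      have hjk : j ≠ k := fun h => hk (h ▸ hj)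
      by_cases hij : i = j
      · subst hij
        have hww : w = w' := by
          by_contra hne
          exact hf.2 i hi i hi w hw w' hw' (hclique i hw hw' hne) (hfw.trans hfw'.symm)
        subst hww
        exact ha i k hik w hw x hx y hy hxw.symm hyw.symm
      · exfalso
        apply hnocommon
        refine ⟨c, fun t => ?_⟩
        have ht : t = i ∨ t = j ∨ t = k := by
          clear * - hij hik hjk
          revert t i j k; decide
        rcases ht with rfl | rfl | rfl
        · exact hfw ▸ hf.1 _ hi w hw
        · exact hfw' ▸ hf.1 _ hj w' hw'
        · exact hcL) (by
      intro z hz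
      obtain ⟨c, hc, h⟩ := hav z hz
      exact ⟨c, hc, fun ⟨i, hi, w, hw, hzw, hfw⟩ => h i hi w hw hzw hfw⟩)
  have hoff : ∀ i ∈ I, ∀ w ∈ Q i, f' w = f w := by
    intro i hi w hw
    apply h0
    intro hwk
    exact Finset.disjoint_left.1 (hdisj i k (fun h => hk (h ▸ hi))) hw hwk
  refine ⟨f', ?_, ?_⟩
  · intro i hi w hw
    rcases Finset.mem_insert.1 hi with rfl | hi
    · exact (h1 w hw).1
    · rw [hoff i hi w hw]; exact hf.1 i hi w hw
  · intro i hi j hj a hai b hbj hab heq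
    rcases Finset.mem_insert.1 hi with rfl | hi' <;>
      rcases Finset.mem_insert.1 hj with rfl | hj'
    · exact hab.ne (h2 a hai b hbj heq)
    · exact (h1 a hai).2 ⟨j, hj', b, hbj, hab, by rw [heq, hoff j hj' b hbj]⟩
    · exact (h1 b hbj).2 ⟨i, hi', a, hai, hab.symm, by rw [← heq, hoff i hi' a hai]⟩
    · rw [hoff i hi' a hai, hoff j hj' b hbj] at heq
      exact hf.2 i hi' j hj' a hai b hbj hab heq

theorem avail18 {V α : Type*} (G : SimpleGraph V)
    (Q : Fin 3 → Finset V)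
    (ha : ∀ i j, i ≠ j → ∀ x ∈ Q i, ∀ b ∈ Q j, ∀ c ∈ Q j,
      G.Adj x b → G.Adj x c → b = c)
    (I : Finset (Fin 3)) (k : Fin 3) (hk : k ∉ I) (f : V → α) (M : Finset α)
    (z : V) (hz : z ∈ Q k) (hI : I.card < M.card) :
    ∃ c ∈ M, ∀ i ∈ I, ∀ w ∈ Q i, G.Adj z w → f w ≠ c := by
  haveI : Nonempty V := ⟨z⟩
  by_contra hcon
  push Not at hcon
  choose! i hi w hw hzw hfw using hcon
  have := Finset.card_le_card_of_injOn i (s := M) (t := I) (fun c hc => hi c hc) (by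
    intro c hc c' hc' h
    rw [← hfw c hc, ← hfw c' hc']
    have : w c = w c' := ha k (i c) (fun h => hk (h ▸ hi c hc)) z hz _ (hw c hc) _
      (h ▸ hw c' hc') (hzw c hc) (hzw c' hc')
    rw [this])
  omega

theorem const18 {V α : Type*} (G : SimpleGraph V)
    (Q : Fin 3 → Finset V)
    (hcover : ∀ w : V, ∃ i, w ∈ Q i)
    (hdisj : ∀ i j, i ≠ j → Disjoint (Q i) (Q j))
    (L : Fin 3 → Finset α)
    (hsize : ∀ i, (Q i).card ≤ (L i).card)
    (d : Fin 3 → α) (hd : ∀ i, d i ∈ L i) (hdinj : Function.Injective d)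
    (I : Finset (Fin 3)) (h : ∀ i ∈ I, (L i).card ≤ 1) :
    ∃ f, Good18 G Q L I f := by
  choose t ht using hcover
  have huniq : ∀ i w, w ∈ Q i → t w = i := by
    intro i w hw
    by_contra hne
    exact Finset.disjoint_left.1 (hdisj _ _ hne) (ht w) hw
  refine ⟨fun w => d (t w), ?_, ?_⟩
  · intro i hi w hw
    show d (t w) ∈ L i
    rw [huniq i w hw]; exact hd i
  · intro i hi j hj a hai b hbj hab heq
    have := hdinj heq
    rw [huniq i a hai, huniq j b hbj] at this
    subst this
    exact hab.ne (Finset.card_le_one.1 ((hsize i).trans (h i hi)) a hai b hbj)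

theorem swap18 {α : Type*} (d e : Fin 3 → α) (hdinj : Function.Injective d)
    (hno : ¬ ∃ c : α, ∀ i, c = d i ∨ c = e i) :
    ∃ c e' : Fin 3 → α, (∀ i, (c i = d i ∧ e' i = e i) ∨ (c i = e i ∧ e' i = d i)) ∧
      (∀ i j, i ≠ j → c i ≠ c j) ∧
      (∀ i j, i ≠ j → e' i = e' j → e' i = c i ∨ e' j = c j) := by
  have h01 : d 0 ≠ d 1 := fun h => absurd (hdinj h) (by decide)
  have h02 : d 0 ≠ d 2 := fun h => absurd (hdinj h) (by decide)
  have h12 : d 1 ≠ d 2 := fun h => absurd (hdinj h) (by decide)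
  have hno' : ∀ c, ¬ ((c = d 0 ∨ c = e 0) ∧ (c = d 1 ∨ c = e 1) ∧ (c = d 2 ∨ c = e 2)) := by
    intro c hc
    apply hno
    refine ⟨c, fun i => ?_⟩
    fin_cases i
    · exact hc.1
    · exact hc.2.1
    · exact hc.2.2
  clear hno hdinj
  generalize hd0 : d 0 = d0 at *
  generalize hd1 : d 1 = d1 at *
  generalize hd2 : d 2 = d2 at *
  generalize he0 : e 0 = e0 at *
  generalize he1 : e 1 = e1 at *
  generalize he2 : e 2 = e2 at *
  suffices H : ∃ c0 c1 c2 f0 f1 f2 : α,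
      ((c0 = d0 ∧ f0 = e0) ∨ (c0 = e0 ∧ f0 = d0)) ∧
      ((c1 = d1 ∧ f1 = e1) ∨ (c1 = e1 ∧ f1 = d1)) ∧
      ((c2 = d2 ∧ f2 = e2) ∨ (c2 = e2 ∧ f2 = d2)) ∧
      c0 ≠ c1 ∧ c0 ≠ c2 ∧ c1 ≠ c2 ∧
      (f0 = f1 → f0 = c0 ∨ f1 = c1) ∧ (f0 = f2 → f0 = c0 ∨ f2 = c2) ∧
      (f1 = f2 → f1 = c1 ∨ f2 = c2) by
    obtain ⟨c0, c1, c2, f0, f1, f2, a0, a1, a2, b0, b1, b2, g0, g1, g2⟩ := H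
    refine ⟨![c0, c1, c2], ![f0, f1, f2], ?_, ?_, ?_⟩
    · intro i; fin_cases i <;> simp <;> grind
    · intro i j hij; fin_cases i <;> fin_cases j <;> simp at hij ⊢ <;> grind
    · intro i j hij; fin_cases i <;> fin_cases j <;> simp at hij ⊢ <;> grind
  have n0 := hno' d0
  have n1 := hno' d1
  have n2 := hno' d2
  have n3 := hno' e0
  clear hno' hd0 hd1 hd2 he0 he1 he2
  by_contra H
  have s000 := fun h => H ⟨d0, d1, d2, e0, e1, e2, by simp, by simp, by simp, h⟩
  have s100 := fun h => H ⟨e0, d1, d2, d0, e1, e2, by simp, by simp, by simp, h⟩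
  have s010 := fun h => H ⟨d0, e1, d2, e0, d1, e2, by simp, by simp, by simp, h⟩
  have s001 := fun h => H ⟨d0, d1, e2, e0, e1, d2, by simp, by simp, by simp, h⟩
  clear H
  grind

theorem tri18 {V α : Type*} [DecidableEq V] [DecidableEq α] (G : SimpleGraph V)
    (Q : Fin 3 → Finset V)
    (hcover : ∀ w : V, ∃ i, w ∈ Q i)
    (hdisj : ∀ i j, i ≠ j → Disjoint (Q i) (Q j))
    (ha : ∀ i j, i ≠ j → ∀ x ∈ Q i, ∀ b ∈ Q j, ∀ c ∈ Q j,
      G.Adj x b → G.Adj x c → b = c)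
    (L : Fin 3 → Finset α)
    (hsize : ∀ i, (Q i).card ≤ (L i).card)
    (d : Fin 3 → α) (hd : ∀ i, d i ∈ L i) (hdinj : Function.Injective d)
    (hnocommon : ¬ ∃ c : α, ∀ i, c ∈ L i)
    (h2 : ∀ i, (L i).card ≤ 2)
    (x : Fin 3 → V) (hx : ∀ i, x i ∈ Q i) (hadj : ∀ i j, i ≠ j → G.Adj (x i) (x j)) :
    ∃ f, Good18 G Q L Finset.univ f := by
  have he : ∀ i, ∃ e, L i = {d i, e} := by
    intro i
    have hpos : 0 < (L i).card := Finset.card_pos.2 ⟨_, hd i⟩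
    have := h2 i
    have hc : (L i).card = 1 ∨ (L i).card = 2 := by omega
    rcases hc with hc | hc
    · obtain ⟨u, hu⟩ := Finset.card_eq_one.1 hc
      have := hd i
      rw [hu, Finset.mem_singleton] at this
      exact ⟨d i, by simp [hu, this]⟩
    · obtain ⟨u, v, huv, hu⟩ := Finset.card_eq_two.1 hc
      have := hd i
      rw [hu, Finset.mem_insert, Finset.mem_singleton] at this
      rcases this with h | h
      · exact ⟨v, by rw [hu, h]⟩
      · exact ⟨u, by rw [hu, h, Finset.pair_comm]⟩
  choose e he using he
  obtain ⟨c, e', h1, hc, hee⟩ := swap18 d e hdinj (by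
    rintro ⟨c, hc⟩
    exact hnocommon ⟨c, fun i => by rw [he i]; simpa using hc i⟩)
  have hL : ∀ i, L i = {c i, e' i} := by
    intro i
    rw [he i]
    rcases h1 i with ⟨h, h'⟩ | ⟨h, h'⟩
    · rw [h, h']
    · rw [h, h', Finset.pair_comm]
  have hdeg : ∀ i, e' i = c i → ∀ w ∈ Q i, w = x i := by
    intro i h w hw
    have : (L i).card ≤ 1 := by rw [hL i, h]; simp
    exact Finset.card_le_one.1 ((hsize i).trans this) w hw _ (hx i)
  choose t ht using hcover
  have huniq : ∀ i w, w ∈ Q i → t w = i := by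
    intro i w hw
    by_contra hne
    exact Finset.disjoint_left.1 (hdisj _ _ hne) (ht w) hw
  refine ⟨fun w => if w = x (t w) then c (t w) else e' (t w), ?_, ?_⟩
  · intro i _ w hw
    simp only [huniq i w hw, hL i]
    split_ifs <;> simp
  · intro i _ j _ a hai b hbj hab heq
    simp only [huniq i a hai, huniq j b hbj] at heq
    by_cases hij : i = j
    · subst hij
      by_cases hax : a = x i <;> by_cases hbx : b = x i
      · exact hab.ne (hax.trans hbx.symm)
      · simp only [hax, hbx, if_true, if_false] at heq
        exact hbx (hdeg i heq.symm b hbj)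
      · simp only [hax, hbx, if_true, if_false] at heq
        exact hax (hdeg i heq a hai)
      · have h3 : ({a, b, x i} : Finset V).card = 3 := by
          rw [Finset.card_eq_three]
          exact ⟨a, b, x i, hab.ne, hax, hbx, rfl⟩
        have h4 : ({a, b, x i} : Finset V) ⊆ Q i := by
          intro w hw
          simp only [Finset.mem_insert, Finset.mem_singleton] at hw
          rcases hw with rfl | rfl | rfl
          · exact hai
          · exact hbj
          · exact hx i
        have := Finset.card_le_card h4
        have := hsize i
        have := h2 i
        omega
    · by_cases hax : a = x i <;> by_cases hbx : b = x j
      · simp only [hax, hbx, if_true] at heq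
        exact hc i j hij heq
      · subst hax
        exact hbx (ha i j hij _ hai b hbj _ (hx j) hab (hadj i j hij))
      · subst hbx
        exact hax (ha j i (Ne.symm hij) _ hbj a hai _ (hx i) hab.symm (hadj j i (Ne.symm hij)))
      · simp only [hax, hbx, if_false] at heq
        rcases hee i j hij heq with h | h
        · exact hax (hdeg i h a hai)
        · exact hbx (hdeg j h b hbj)

theorem stmt_18
    {V : Type*} [Fintype V] [DecidableEq V] (G : SimpleGraph V)
    {α : Type*} [DecidableEq α]
    (Q : Fin 3 → Finset V)
    (hcover : ∀ w : V, ∃ i, w ∈ Q i)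
    (hdisj : ∀ i j, i ≠ j → Disjoint (Q i) (Q j))
    (hclique : ∀ i, G.IsClique (Q i : Set V))
    (ha : ∀ i j, i ≠ j → ∀ x ∈ Q i, ∀ b ∈ Q j, ∀ c ∈ Q j,
      G.Adj x b → G.Adj x c → b = c)
    (hb : ∀ i j k, i ≠ j → j ≠ k → i ≠ k →
      ∀ a ∈ Q i, ∀ b ∈ Q j, ∀ c ∈ Q k, G.Adj a b → G.Adj a c → G.Adj b c)
    (L : Fin 3 → Finset α)
    (hsize : ∀ i, (Q i).card ≤ (L i).card)
    (d : Fin 3 → α) (hd : ∀ i, d i ∈ L i) (hdinj : Function.Injective d)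
    (hnocommon : ¬ ∃ c : α, ∀ i, c ∈ L i) :
    ∃ f : V → α, (∀ i, ∀ w ∈ Q i, f w ∈ L i) ∧ ∀ a b : V, G.Adj a b → f a ≠ f b := by
  suffices H : ∃ f, Good18 G Q L Finset.univ f by
    obtain ⟨f, hf1, hf2⟩ := H
    refine ⟨f, fun i w hw => hf1 i (Finset.mem_univ _) w hw, fun a b hab => ?_⟩
    obtain ⟨i, hi⟩ := hcover a
    obtain ⟨j, hj⟩ := hcover b
    exact hf2 i (Finset.mem_univ _) j (Finset.mem_univ _) a hi b hj hab
  have hex := ext18 G Q hdisj hclique ha L hsize hnocommon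
  have hav := fun I k hk (f : V → α) => avail18 G Q ha I k hk f (L k)
  have hconst := const18 G Q hcover hdisj L hsize d hd hdinj
  have pair' : ∀ i j, i ≠ j → 1 < (L j).card → ∃ f, Good18 G Q L {j, i} f := by
    intro i j hij hj
    obtain ⟨f, hf⟩ := hex ∅ i (by simp) (fun w => d 0) (by simp [Good18])
      (fun z hz => ⟨d i, hd i, by simp⟩)
    exact hex _ j (by simpa using hij.symm) f hf
      (fun z hz => hav _ j (by simpa using hij.symm) f z hz (by simpa using hj))
  have pair : ∀ i j, i ≠ j → ∃ f, Good18 G Q L {i, j} f := by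
    intro i j hij
    by_cases hj : 1 < (L j).card
    · rw [Finset.pair_comm]; exact pair' i j hij hj
    by_cases hi : 1 < (L i).card
    · exact pair' j i hij.symm hi
    · apply hconst
      intro t ht
      simp only [Finset.mem_insert, Finset.mem_singleton] at ht
      rcases ht with rfl | rfl <;> omega
  have oth : ∀ k : Fin 3, ∃ i j : Fin 3, i ≠ j ∧ j ≠ k ∧ i ≠ k ∧ k ∉ ({i, j} : Finset (Fin 3)) ∧
      insert k ({i, j} : Finset (Fin 3)) = Finset.univ := by decide
  by_cases hA : ∃ k, 2 < (L k).card
  · obtain ⟨k, hk⟩ := hA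
    obtain ⟨i, j, hij, hjk, hik, hkI, hun⟩ := oth k
    obtain ⟨f, hf⟩ := pair i j hij
    rw [← hun]
    exact hex _ k hkI f hf (fun z hz => hav _ k hkI f z hz (by
      rw [Finset.card_pair hij]; exact hk))
  push Not at hA
  by_cases hT : ∃ x : Fin 3 → V, (∀ i, x i ∈ Q i) ∧ ∀ i j, i ≠ j → G.Adj (x i) (x j)
  · obtain ⟨x, hx, hadj⟩ := hT
    exact tri18 G Q hcover hdisj ha L hsize d hd hdinj hnocommon hA x hx hadj
  by_cases hB : ∃ k, 1 < (L k).card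
  · obtain ⟨k, hk⟩ := hB
    obtain ⟨i, j, hij, hjk, hik, hkI, hun⟩ := oth k
    obtain ⟨f, hf⟩ := pair i j hij
    rw [← hun]
    refine hex _ k hkI f hf (fun z hz => ?_)
    by_cases hn : ∃ x ∈ Q i, G.Adj z x
    · obtain ⟨x, hxi, hzx⟩ := hn
      obtain ⟨c, hc, h⟩ := hav {i} k (by simpa using hik.symm) f z hz (by simpa using hk)
      refine ⟨c, hc, fun t ht w hw hzw => ?_⟩
      simp only [Finset.mem_insert, Finset.mem_singleton] at ht
      rcases ht with rfl | rfl
      · exact h t (by simp) w hw hzw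
      · exfalso
        apply hT
        have hxw := hb k i t hik.symm hij hjk.symm z hz x hxi w hw hzx hzw
        have cov : ∀ s, s = i ∨ s = t ∨ s = k := by
          clear * - hij hik hjk
          revert i t k; decide
        refine ⟨fun s => if s = i then x else if s = t then w else z, ?_, ?_⟩
        · intro s
          rcases cov s with rfl | rfl | rfl
          · simpa using hxi
          · simpa [hij.symm] using hw
          · simpa [hik.symm, hjk.symm] using hz
        · intro s r hsr
          rcases cov s with rfl | rfl | rfl <;> rcases cov r with rfl | rfl | rfl <;>
            first
            | exact absurd rfl hsr
            | simp [hij.symm, hik.symm, hjk.symm, hzx, hzw, hxw, hzx.symm, hzw.symm, hxw.symm]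
    · obtain ⟨c, hc, h⟩ := hav {j} k (by simpa using hjk.symm) f z hz (by simpa using hk)
      refine ⟨c, hc, fun t ht w hw hzw => ?_⟩
      simp only [Finset.mem_insert, Finset.mem_singleton] at ht
      rcases ht with rfl | rfl
      · exact absurd ⟨w, hw, hzw⟩ hn
      · exact h t (by simp) w hw hzw
  · push Not at hB
    exact hconst _ (fun i _ => hB i)
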